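/- On ℝ (n = 1), let ψ = χ_{(0,1)} − χ_{(−1,0)}, ψ_t(x) = t^{-1}ψ(t^{-1}x), and b = χ_{(0,1)}. Then the measure dμ(x,t) = |ψ_t * b(x)|^2 (dt/t) dx is a Carleson measure on ℝ^2_+ = ℝ × (0,∞), but it is not a strong Carleson measure: for every x ∈ (−1,0), ∫_0^1 |ψ_t * b(x)|^2 dt/t ≥ −log(−x) − 2, and hence sup_{x ∈ (−1,0)} ∫_0^1 |ψ_t * b(x)|^2 dt/t = ∞. -/

import Mathlib

open MeasureTheory Real Set Filter
open scoped ENNReal NNReal Topology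

noncomputable section

/-- `ψ = χ_{(0,1)} − χ_{(−1,0)}` -/
def psi : ℝ → ℝ :=
  (Ioo (0:ℝ) 1).indicator (fun _ => (1:ℝ)) - (Ioo (-1:ℝ) 0).indicator (fun _ => (1:ℝ))

/-- `b = χ_{(0,1)}` -/
def bfun : ℝ → ℝ := (Ioo (0:ℝ) 1).indicator (fun _ => (1:ℝ))

/-- `(ψ_t * b)(x)` where `ψ_t(x) = t⁻¹ ψ(t⁻¹ x)` -/
def psiConv (t x : ℝ) : ℝ := ∫ y : ℝ, t⁻¹ * psi (t⁻¹ * (x - y)) * bfun y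

lemma psiConv_eq (t x : ℝ) (ht : 0 < t) :
    psiConv t x = t⁻¹ * (max 0 (min x 1 - max (x-t) 0) - max 0 (min (x+t) 1 - max x 0)) := by
  have key : ∀ y : ℝ, t⁻¹ * psi (t⁻¹ * (x - y)) * bfun y =
      t⁻¹ * ((Ioo (max (x-t) 0) (min x 1)).indicator (fun _ => (1:ℝ)) y -
        (Ioo (max x 0) (min (x+t) 1)).indicator (fun _ => (1:ℝ)) y) := by
    intro y
    have e1 : t⁻¹ * (x - y) ∈ Ioo (0:ℝ) 1 ↔ y ∈ Ioo (x-t) x := by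
      simp only [mem_Ioo]
      rw [inv_mul_eq_div, div_lt_one ht, div_pos_iff_of_pos_right ht]
      constructor <;> rintro ⟨h1, h2⟩ <;> constructor <;> linarith
    have e2 : t⁻¹ * (x - y) ∈ Ioo (-1:ℝ) 0 ↔ y ∈ Ioo x (x+t) := by
      simp only [mem_Ioo]
      rw [inv_mul_eq_div, lt_div_iff₀ ht, div_lt_iff₀ ht]
      constructor <;> rintro ⟨h1, h2⟩ <;> constructor <;> linarith
    have i1 : Ioo (max (x-t) 0) (min x 1) = Ioo (x-t) x ∩ Ioo 0 1 := by
      rw [Ioo_inter_Ioo]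
    have i2 : Ioo (max x 0) (min (x+t) 1) = Ioo x (x+t) ∩ Ioo 0 1 := by
      rw [Ioo_inter_Ioo]
    rw [i1, i2]
    classical
    simp only [psi, bfun, Pi.sub_apply, indicator_apply, e1, e2, mem_inter_iff]
    by_cases h1 : y ∈ Ioo (x-t) x <;> by_cases h2 : y ∈ Ioo x (x+t) <;>
      by_cases h3 : y ∈ Ioo (0:ℝ) 1 <;> simp [h1, h2, h3]
  unfold psiConv
  simp_rw [key]
  have hI : ∀ a b : ℝ, Integrable ((Ioo a b).indicator (fun _ => (1:ℝ))) := by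
    intro a b
    rw [integrable_indicator_iff measurableSet_Ioo]
    exact integrableOn_const (by simp)
  rw [integral_const_mul, integral_sub (hI _ _) (hI _ _)]
  simp only [integral_indicator measurableSet_Ioo, integral_const, smul_eq_mul, mul_one,
    Measure.restrict_apply_univ, Measure.real, Real.volume_Ioo, ENNReal.toReal_ofReal',
    max_comm (0:ℝ)]

lemma psiConv_abs_le (t x : ℝ) (ht : 0 < t) : |psiConv t x| ≤ 1 := by
  rw [psiConv_eq t x ht, abs_mul, abs_of_pos (inv_pos.2 ht), inv_mul_le_iff₀ ht, mul_one]
  have a1 : min x 1 ≤ x := min_le_left _ _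
  have a2 : x - t ≤ max (x-t) 0 := le_max_left _ _
  have a3 : min (x+t) 1 ≤ x + t := min_le_left _ _
  have a4 : x ≤ max x 0 := le_max_left _ _
  have b1 : max 0 (min x 1 - max (x-t) 0) ≤ t := max_le ht.le (by linarith)
  have b2 : max 0 (min (x+t) 1 - max x 0) ≤ t := max_le ht.le (by linarith)
  have b3 : 0 ≤ max 0 (min x 1 - max (x-t) 0) := le_max_left _ _
  have b4 : 0 ≤ max 0 (min (x+t) 1 - max x 0) := le_max_left _ _
  rw [abs_le]; constructor <;> linarith

lemma psiConv_eq_zero (t x : ℝ) (ht : 0 < t) (h0 : t ≤ |x|) (h1 : t ≤ |x - 1|) :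
    psiConv t x = 0 := by
  rw [psiConv_eq t x ht]
  rcases le_abs.1 h0 with h | h <;> rcases le_abs.1 h1 with h' | h'
  · rw [max_eq_left, max_eq_left]; · simp
    · have := min_le_right (x+t) 1; have := le_max_left x 0; linarith
    · have := min_le_right x 1; have := le_max_left (x-t) 0; linarith
  · rw [min_eq_left (by linarith), max_eq_left (by linarith : 0 ≤ x - t),
      min_eq_left (by linarith), max_eq_left (by linarith : 0 ≤ x)]
    simp
  · linarith
  · rw [max_eq_left, max_eq_left]; · simp
    · have := min_le_left (x+t) 1; have := le_max_right x 0; linarith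
    · have := min_le_left x 1; have := le_max_right (x-t) 0; linarith

/-- The cone kernel over the point `c`. -/
def coneK (c : ℝ) (p : ℝ × ℝ) : ℝ≥0∞ :=
  {q : ℝ × ℝ | |q.1 - c| < q.2}.indicator (fun q => ENNReal.ofReal q.2⁻¹) p

lemma coneK_meas (c : ℝ) : Measurable (coneK c) := by
  unfold coneK
  refine Measurable.indicator (by fun_prop) ?_
  exact measurableSet_lt (by fun_prop) (by fun_prop)

lemma coneK_int (c a h : ℝ) (hh : 0 < h) :
    ∫⁻ x in Icc a (a + h), ∫⁻ t in Ioc (0:ℝ) h, coneK c (x, t) ≤ 2 * ENNReal.ofReal h := by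
  rw [lintegral_lintegral_swap (f := fun x t => coneK c (x, t)) (coneK_meas c).aemeasurable]
  calc ∫⁻ t in Ioc (0:ℝ) h, ∫⁻ x in Icc a (a + h), coneK c (x, t)
      ≤ ∫⁻ t in Ioc (0:ℝ) h, 2 := by
        refine setLIntegral_mono' measurableSet_Ioc fun t ht => ?_
        refine (setLIntegral_le_lintegral _ _).trans ?_
        have e : ∀ x, coneK c (x, t) =
            (Ioo (c - t) (c + t)).indicator (fun _ => ENNReal.ofReal t⁻¹) x := by
          intro x
          classical
          simp only [coneK, indicator_apply, mem_ofPred_eq, mem_Ioo, abs_lt]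
          congr 1
          apply propext
          constructor <;> rintro ⟨h1, h2⟩ <;> constructor <;> linarith
        simp_rw [e]
        rw [lintegral_indicator measurableSet_Ioo, lintegral_const,
          Measure.restrict_apply_univ, Real.volume_Ioo,
          ← ENNReal.ofReal_mul (inv_nonneg.2 ht.1.le)]
        have : t⁻¹ * (c + t - (c - t)) = 2 := by
          have := ht.1.ne'
          field_simp; ring
        rw [this]; simp
    _ = 2 * ENNReal.ofReal h := by simp

lemma carleson_part (a h : ℝ) (hh : 0 < h) :
    ∫⁻ x in Icc a (a + h), ∫⁻ t in Ioc (0:ℝ) h,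
          ENNReal.ofReal ((psiConv t x) ^ 2 * t⁻¹) ≤ 4 * ENNReal.ofReal h := by
  calc _ ≤ ∫⁻ x in Icc a (a + h), ∫⁻ t in Ioc (0:ℝ) h, (coneK 0 (x, t) + coneK 1 (x, t)) := by
        refine lintegral_mono fun x => setLIntegral_mono' measurableSet_Ioc fun t ht => ?_
        have hb : ENNReal.ofReal ((psiConv t x) ^ 2 * t⁻¹) ≤ ENNReal.ofReal t⁻¹ := by
          apply ENNReal.ofReal_le_ofReal
          have := (sq_le_one_iff_abs_le_one _).2 (psiConv_abs_le t x ht.1)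
          exact mul_le_of_le_one_left (inv_nonneg.2 ht.1.le) this
        by_cases h0 : |x - 0| < t
        · refine hb.trans (le_add_right ?_)
          have : (x, t) ∈ {q : ℝ × ℝ | |q.1 - 0| < q.2} := h0
          rw [coneK, indicator_of_mem this]
        by_cases h1 : |x - 1| < t
        · refine hb.trans (le_add_left ?_)
          have : (x, t) ∈ {q : ℝ × ℝ | |q.1 - 1| < q.2} := h1
          rw [coneK, indicator_of_mem this]
        rw [psiConv_eq_zero t x ht.1 (by simpa using h0) (by simpa using h1)]
        simp
    _ = (∫⁻ x in Icc a (a + h), ∫⁻ t in Ioc (0:ℝ) h, coneK 0 (x, t)) +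
        ∫⁻ x in Icc a (a + h), ∫⁻ t in Ioc (0:ℝ) h, coneK 1 (x, t) := by
        rw [← lintegral_add_left]
        · congr 1; ext x
          rw [lintegral_add_left]
          exact (coneK_meas 0).comp measurable_prodMk_left
        · exact (coneK_meas 0).lintegral_prod_right'
    _ ≤ 2 * ENNReal.ofReal h + 2 * ENNReal.ofReal h :=
        add_le_add (coneK_int _ _ _ hh) (coneK_int _ _ _ hh)
    _ = 4 * ENNReal.ofReal h := by rw [← add_mul]; norm_num

lemma lower_part (x : ℝ) (hx : x ∈ Ioo (-1:ℝ) 0) :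
    ENNReal.ofReal (-Real.log (-x) - 2) ≤
          ∫⁻ t in Ioc (0:ℝ) 1, ENNReal.ofReal ((psiConv t x) ^ 2 * t⁻¹) := by
  obtain ⟨hx1, hx0⟩ := hx
  have hle : -x ≤ 1 := by linarith
  have hcont : ContinuousOn (fun t : ℝ => (1 + x / t)^2 * t⁻¹) (uIcc (-x) 1) := by
    rw [uIcc_of_le hle]
    have : ∀ t ∈ Icc (-x) 1, t ≠ 0 := fun t ht => by have := ht.1; linarith
    fun_prop (disch := assumption)
  have hint := hcont.intervalIntegrable (μ := volume)
  have hval : ∫ t in (-x)..1, (1 + x / t)^2 * t⁻¹ =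
      (Real.log 1 - 2 * x / 1 - x^2 / (2 * 1^2)) -
      (Real.log (-x) - 2 * x / (-x) - x^2 / (2 * (-x)^2)) := by
    refine intervalIntegral.integral_eq_sub_of_hasDerivAt
      (f := fun t => Real.log t - 2 * x / t - x^2 / (2 * t^2)) ?_ hint
    intro t ht
    rw [uIcc_of_le hle] at ht
    have ht0 : t ≠ 0 := by have := ht.1; linarith
    have d1 := Real.hasDerivAt_log ht0
    have d2 := (hasDerivAt_const t (2*x)).div (hasDerivAt_id t) ht0
    have d3 := (hasDerivAt_const t (x^2)).div (((hasDerivAt_id t).pow 2).const_mul 2)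
      (by simpa using ht0)
    refine HasDerivAt.congr_deriv (f := fun t => Real.log t - 2 * x / t - x^2 / (2 * t^2))
      ((d1.sub d2).sub d3) ?_
    simp
    field_simp
    ring
  have hv2 : -Real.log (-x) - 2 ≤ ∫ t in (-x)..1, (1 + x / t)^2 * t⁻¹ := by
    rw [hval]
    have e1 : 2 * x / (-x) = -2 := by have := hx0.ne; field_simp
    have e2 : x^2 / (2 * (-x)^2) = 1/2 := by have := hx0.ne; field_simp
    rw [e1, e2]; simp; nlinarith
  rw [intervalIntegral.integral_of_le hle] at hv2
  refine (ENNReal.ofReal_le_ofReal hv2).trans ?_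
  rw [ofReal_integral_eq_lintegral_ofReal]
  · calc _ = ∫⁻ t in Ioc (-x) 1, ENNReal.ofReal ((psiConv t x) ^ 2 * t⁻¹) := by
          refine setLIntegral_congr_fun measurableSet_Ioc fun t ht => ?_
          have h1 := ht.1
          have h2 := ht.2
          have ht0 : 0 < t := by linarith
          have : psiConv t x = -(1 + x / t) := by
            rw [psiConv_eq t x ht0, min_eq_left (by linarith : x ≤ 1),
              max_eq_right (by linarith : x - t ≤ 0), min_eq_left (by linarith : x + t ≤ 1),
              max_eq_right hx0.le, max_eq_left (by linarith : x - 0 ≤ 0),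
              max_eq_right (by linarith : 0 ≤ x + t - 0)]
            field_simp; ring
          simp only [this, neg_sq]
      _ ≤ _ := lintegral_mono_set (Ioc_subset_Ioc_left (by linarith))
  · exact (intervalIntegrable_iff_integrableOn_Ioc_of_le hle).1 hint
  · filter_upwards [ae_restrict_mem measurableSet_Ioc] with t ht
    have : 0 < t := by have := ht.1; linarith
    simp only [Pi.zero_apply]
    positivity

/-- Example 3.8: the measure `|ψ_t*b(x)|² (dt/t) dx` is a Carleson measure
on `ℝ²₊` but not a strong Carleson measure: for each `x ∈ (−1,0)` one has
`∫_0^1 |ψ_t*b(x)|² dt/t ≥ −log(−x) − 2`, hence the supremum over `x ∈ (−1,0)` is infinite. -/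
theorem stmt19 :
    (∃ B : ℝ≥0∞, B ≠ ⊤ ∧ ∀ (a h : ℝ), 0 < h →
        ∫⁻ x in Icc a (a + h), ∫⁻ t in Ioc (0:ℝ) h,
          ENNReal.ofReal ((psiConv t x) ^ 2 * t⁻¹) ≤ B * ENNReal.ofReal h) ∧
      (∀ x ∈ Ioo (-1:ℝ) 0,
        ENNReal.ofReal (-Real.log (-x) - 2) ≤
          ∫⁻ t in Ioc (0:ℝ) 1, ENNReal.ofReal ((psiConv t x) ^ 2 * t⁻¹)) ∧
      (⨆ x ∈ Ioo (-1:ℝ) 0,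
          ∫⁻ t in Ioc (0:ℝ) 1, ENNReal.ofReal ((psiConv t x) ^ 2 * t⁻¹)) = ⊤ := by
  refine ⟨⟨4, by simp, fun a h hh => carleson_part a h hh⟩, lower_part, ?_⟩
  refine ENNReal.eq_top_of_forall_nnreal_le fun r => ?_
  have hr : (0:ℝ) ≤ r := r.2
  have hx : -Real.exp (-(r + 2 : ℝ)) ∈ Ioo (-1:ℝ) 0 := by
    have h1 : Real.exp (-(r + 2 : ℝ)) < 1 := Real.exp_zero ▸ Real.exp_lt_exp.2 (by linarith)
    have h2 := Real.exp_pos (-(r + 2 : ℝ))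
    constructor <;> linarith
  have := lower_part _ hx
  rw [neg_neg, Real.log_exp] at this
  refine le_trans ?_ (le_iSup₂_of_le _ hx this)
  simp
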